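/- Selberg's Laguerre-type integral: for positive integers α and N and real λ > -1, ∫_{[0,∞)^N} ∏_{i<j}(k_i - k_j)^{2α} ∏_{i=1}^N e^{-k_i} k_i^{λ} dk = ∏_{j=0}^{N-1} Γ(1 + α + jα)·Γ(1 + λ + jα) / Γ(1 + α). -/

import Mathlib

/-!
Expanding the polynomial `Δ^{2α}` into monomials turns the integral into
`Γ(1+λ)^N · L_{1+λ}(Δ^{2α})`, where `L_s` is the linear functional `x^m ↦ ∏ (s)_{m_i}` on
polynomials (`integral_eval_mul_weight`). Everything else is algebra of this functional, which
makes sense for all real parameters, possibly different for different variables.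

* Integration by parts and antisymmetrization give Aomoto's recursion for
  `L_s(x_1 ⋯ x_r Δ^{2α})` (`aomoto_step`, `aomoto`). For `r = N` it relates the parameters `s`
  and `s + 1`: `s^N L_{s+1}(Δ^{2α}) = ∏_j (s + jα) · L_s(Δ^{2α})`.
* The polynomial `∏_j (s)_{jα}` satisfies the same shift equation, so `L_s(Δ^{2α})` is a constant
  `C_N` times it (`exists_gammaMoment_selbergPoly`).
* For `r = N - 1` the recursion computes the functional in which one variable has parameter `s`
  and the others `s + 1`. At `s = 0` the distinguished variable is evaluated at `0`, where
  `Δ_N^{2α}` becomes `(∏ x_i)^{2α} Δ_{N-1}^{2α}`. This yields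
  `C_N = C_{N-1} (Nα)! / α!` (`gammaMoment_selbergPoly`).
-/

/-! ### The Gamma moment functional -/

open MvPolynomial

/-- The linear functional on polynomials in `x_1, …, x_n` sending `∏ x_i ^ m_i` to
`∏ (s_i)_{m_i}`. For positive `s_i` it is the expectation under independent Gamma variables
with shape parameters `s_i`, but being defined through rising factorials it makes sense for
every real `s`, in particular at `s_i = 0`. -/
noncomputable def gammaMoment {n : ℕ} (s : Fin n → ℝ) : MvPolynomial (Fin n) ℝ →ₗ[ℝ] ℝ :=
  (basisMonomials (Fin n) ℝ).constr ℝ fun m => ∏ i, (ascPochhammer ℝ (m i)).eval (s i)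

theorem gammaMoment_monomial {n : ℕ} (s : Fin n → ℝ) (m : Fin n →₀ ℕ) (c : ℝ) :
    gammaMoment s (monomial m c) = c * ∏ i, (ascPochhammer ℝ (m i)).eval (s i) := by
  have : (monomial m c : MvPolynomial (Fin n) ℝ) = c • basisMonomials (Fin n) ℝ m := by
    simp [smul_monomial]
  rw [this, map_smul, gammaMoment, Module.Basis.constr_basis, smul_eq_mul]

theorem prod_X_pow_eq {n : ℕ} (e : Fin n → ℕ) :
    (∏ i, X i ^ e i : MvPolynomial (Fin n) ℝ) = monomial (Finsupp.equivFunOnFinite.symm e) 1 := by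
  rw [monomial_eq, Finsupp.prod_fintype _ _ (by simp)]
  simp

/-- Multiplying the integrand by a monomial `x ^ e` shifts the parameters from `s` to `s + e`:
this is `(s)_{e+m} = (s)_e (s+e)_m`. -/
theorem gammaMoment_prod_X_pow_mul {n : ℕ} (s : Fin n → ℝ) (e : Fin n → ℕ)
    (f : MvPolynomial (Fin n) ℝ) :
    gammaMoment s ((∏ i, X i ^ e i) * f) =
      (∏ i, (ascPochhammer ℝ (e i)).eval (s i)) * gammaMoment (fun i => s i + e i) f := by
  induction f using MvPolynomial.induction_on' with
  | monomial m c =>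
    rw [prod_X_pow_eq, monomial_mul, gammaMoment_monomial, gammaMoment_monomial, one_mul,
      mul_left_comm, ← Finset.prod_mul_distrib]
    congr 1
    refine Finset.prod_congr rfl fun i _ => ?_
    simp only [Finsupp.add_apply, Finsupp.equivFunOnFinite_symm_apply_apply]
    rw [← ascPochhammer_mul]
    simp
  | add p q hp hq => rw [mul_add, map_add, map_add, hp, hq, mul_add]

/-- Integration by parts: the total derivative of `x_i f` against the weight
`e^{-x_i} x_i^{s_i - 1}` integrates to zero. -/
theorem gammaMoment_X_mul {n : ℕ} (s : Fin n → ℝ) (i : Fin n) (f : MvPolynomial (Fin n) ℝ) :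
    gammaMoment s (X i * f) = s i * gammaMoment s f + gammaMoment s (X i * pderiv i f) := by
  induction f using MvPolynomial.induction_on' with
  | monomial m c =>
    have h : ∏ j, (ascPochhammer ℝ ((Finsupp.single i 1 + m : Fin n →₀ ℕ) j)).eval (s j) =
        (s i + m i) * ∏ j, (ascPochhammer ℝ (m j)).eval (s j) := by
      rw [← Finset.mul_prod_erase _ _ (Finset.mem_univ i),
        ← Finset.mul_prod_erase _ (fun j => (ascPochhammer ℝ (m j)).eval (s j))
          (Finset.mem_univ i), ← mul_assoc]
      congr 1
      · rw [Finsupp.add_apply, Finsupp.single_eq_same, add_comm, ascPochhammer_succ_eval, mul_comm]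
      · refine Finset.prod_congr rfl fun j hj => ?_
        rw [Finsupp.add_apply, Finsupp.single_eq_of_ne (Finset.ne_of_mem_erase hj), zero_add]
    rw [X_mul_pderiv_monomial, map_nsmul, X, monomial_mul, gammaMoment_monomial,
      gammaMoment_monomial, h, nsmul_eq_mul]
    ring
  | add p q hp hq => simp only [mul_add, map_add, hp, hq]; ring

/-- With equal parameters the functional is symmetric in the variables. -/
theorem gammaMoment_rename {n : ℕ} (s : ℝ) (σ : Equiv.Perm (Fin n))
    (f : MvPolynomial (Fin n) ℝ) :
    gammaMoment (fun _ => s) (rename σ f) = gammaMoment (fun _ => s) f := by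
  induction f using MvPolynomial.induction_on' with
  | monomial m c =>
    rw [rename_monomial, gammaMoment_monomial, gammaMoment_monomial]
    congr 1
    rw [← Equiv.prod_comp σ]
    simp [Finsupp.mapDomain_apply σ.injective]
  | add p q hp hq => simp only [map_add, hp, hq]

/-- If the parameters depend polynomially on `t`, so does the value of the functional. -/
theorem gammaMoment_poly {n : ℕ} (q : Fin n → Polynomial ℝ) (f : MvPolynomial (Fin n) ℝ) :
    ∃ p : Polynomial ℝ, ∀ t, gammaMoment (fun i => (q i).eval t) f = p.eval t := by
  induction f using MvPolynomial.induction_on' with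
  | monomial m c =>
    refine ⟨Polynomial.C c * ∏ i, (ascPochhammer ℝ (m i)).comp (q i), fun t => ?_⟩
    simp [gammaMoment_monomial, Polynomial.eval_prod]
  | add p q hp hq =>
    obtain ⟨a, ha⟩ := hp
    obtain ⟨b, hb⟩ := hq
    exact ⟨a + b, fun t => by simp [ha, hb]⟩

/-- Since `(0)_m` vanishes for `m ≥ 1`, a variable with parameter `0` is evaluated at `0`. -/
theorem gammaMoment_cons_zero {n : ℕ} (s : Fin n → ℝ) (f : MvPolynomial (Fin (n + 1)) ℝ) :
    gammaMoment (Fin.cons 0 s : Fin (n + 1) → ℝ) f =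
      gammaMoment s (aeval (Fin.cons 0 X : Fin (n + 1) → MvPolynomial (Fin n) ℝ) f) := by
  induction f using MvPolynomial.induction_on' with
  | monomial m c =>
    rw [gammaMoment_monomial, aeval_monomial, Finsupp.prod_fintype _ _ (by simp),
      Fin.prod_univ_succ, Fin.prod_univ_succ]
    simp only [Fin.cons_zero, Fin.cons_succ]
    rw [prod_X_pow_eq (fun i => m (Fin.succ i))]
    rcases Nat.eq_zero_or_pos (m 0) with h | h
    · rw [h]
      simp [gammaMoment_monomial, algebraMap_eq, C_mul_monomial]
    · rw [ascPochhammer_eval_zero, if_neg h.ne', zero_pow h.ne']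
      simp
  | add p q hp hq => simp only [map_add, hp, hq]

/-! ### Even powers of the Vandermonde determinant -/

/-- `∏_{i<j} (x_j - x_i)^{2α}`, the even power `Δ^{2α}` of the Vandermonde determinant, as a
formal polynomial. -/
noncomputable def selbergPoly (α n : ℕ) : MvPolynomial (Fin n) ℝ :=
  ∏ i : Fin n, ∏ j ∈ Finset.Ioi i, (X j - X i) ^ (2 * α)

theorem selbergPoly_eq_det (α n : ℕ) :
    selbergPoly α n = (Matrix.vandermonde (X : Fin n → MvPolynomial (Fin n) ℝ)).det ^ (2 * α) := by
  simp only [selbergPoly, Matrix.det_vandermonde, Finset.prod_pow]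

theorem rename_selbergPoly (α n : ℕ) (σ : Equiv.Perm (Fin n)) :
    rename σ (selbergPoly α n) = selbergPoly α n := by
  have h : rename σ (Matrix.vandermonde (X : Fin n → MvPolynomial (Fin n) ℝ)).det =
      (Equiv.Perm.sign σ : MvPolynomial (Fin n) ℝ) *
        (Matrix.vandermonde (X : Fin n → MvPolynomial (Fin n) ℝ)).det := by
    rw [← Matrix.det_permute, AlgHom.map_det]
    congr 1
    ext i j
    simp [Matrix.vandermonde]
  rw [selbergPoly_eq_det, map_pow, h, mul_pow, pow_mul (Int.cast _)]
  rcases Int.units_eq_one_or (Equiv.Perm.sign σ) with h | h <;> simp [h]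

/-- Setting the first variable to `0` in `Δ^{2α}`. -/
theorem aeval_selbergPoly_succ (α n : ℕ) :
    aeval (Fin.cons 0 X : Fin (n + 1) → MvPolynomial (Fin n) ℝ) (selbergPoly α (n + 1)) =
      (∏ i, X i ^ (2 * α)) * selbergPoly α n := by
  simp only [selbergPoly, Fin.prod_univ_succ, Fin.prod_Ioi_zero, Fin.prod_Ioi_succ, map_mul,
    map_prod, map_pow, map_sub, aeval_X, Fin.cons_zero, Fin.cons_succ, sub_zero]

theorem ne_X_sub {n : ℕ} {i j : Fin n} (h : i ≠ j) :
    (X i - X j : MvPolynomial (Fin n) ℝ) ≠ 0 :=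
  sub_ne_zero.mpr fun e => h (X_injective e)

theorem selbergPoly_dvd {α n : ℕ} (hα : 0 < α) {i j : Fin n} (h : i ≠ j) :
    (X i - X j : MvPolynomial (Fin n) ℝ) ∣ selbergPoly α n := by
  wlog hij : j < i generalizing i j
  · have := this h.symm (lt_of_le_of_ne (not_lt.mp hij) h)
    rwa [← neg_sub, neg_dvd]
  refine (dvd_pow_self _ (by omega : 2 * α ≠ 0)).trans ?_
  exact (Finset.dvd_prod_of_mem (fun i => (X i - X j : MvPolynomial (Fin n) ℝ) ^ (2 * α)) (Finset.mem_Ioi.mpr hij)).trans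
    (Finset.dvd_prod_of_mem (fun j => ∏ i ∈ Finset.Ioi j, (X i - X j : MvPolynomial (Fin n) ℝ) ^ (2 * α)) (Finset.mem_univ j))

theorem selbergPoly_eq_prod_filter (α n : ℕ) :
    selbergPoly α n = ∏ p ∈ Finset.univ.filter (fun p : Fin n × Fin n => p.1 < p.2),
      (X p.1 - X p.2) ^ (2 * α) := by
  rw [Finset.prod_filter, ← Finset.univ_product_univ, Finset.prod_product, selbergPoly]
  refine Finset.prod_congr rfl fun i _ => ?_
  rw [← Finset.prod_filter]
  refine Finset.prod_congr (by ext; simp) fun j _ => ?_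
  rw [← neg_sub, (even_two_mul α).neg_pow]

theorem derivation_prod {ι A : Type*} [DecidableEq ι] [CommRing A] [Algebra ℝ A]
    (d : Derivation ℝ A A) (s : Finset ι) (f : ι → A) :
    d (∏ p ∈ s, f p) = ∑ p ∈ s, (∏ q ∈ s.erase p, f q) * d (f p) := by
  induction s using Finset.induction_on with
  | empty => simp
  | insert a s ha ih =>
    rw [Finset.prod_insert ha, d.leibniz, ih, Finset.sum_insert ha, Finset.erase_insert ha,
      add_comm, smul_eq_mul, smul_eq_mul, Finset.mul_sum]
    congr 1
    refine Finset.sum_congr rfl fun p hp => ?_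
    have hpa : p ≠ a := fun e => ha (e ▸ hp)
    rw [Finset.erase_insert_of_ne hpa.symm, Finset.prod_insert (by simp [ha]), mul_assoc]

/-- `∂_i Δ^{2α} = 2α ∑_{j ≠ i} Δ^{2α} / (x_i - x_j)`, where `E i j` stands for the quotient. -/
theorem pderiv_selbergPoly {α n : ℕ} (hα : 0 < α) (E : Fin n → Fin n → MvPolynomial (Fin n) ℝ)
    (hE : ∀ i j, i ≠ j → (X i - X j) * E i j = selbergPoly α n) (i : Fin n) :
    pderiv i (selbergPoly α n) = (2 * α : ℝ) • ∑ j ∈ Finset.univ.erase i, E i j := by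
  have hneg : ∀ a b, a ≠ b → E a b = -E b a := fun a b h => by
    apply mul_left_cancel₀ (ne_X_sub h)
    rw [hE a b h, ← hE b a h.symm]
    ring
  have h1 : pderiv i (selbergPoly α n) =
      ∑ p ∈ Finset.univ.filter (fun p : Fin n × Fin n => p.1 < p.2),
        (2 * α : ℝ) • (E p.1 p.2 * pderiv i (X p.1 - X p.2 : MvPolynomial (Fin n) ℝ)) := by
    conv_lhs => rw [selbergPoly_eq_prod_filter]
    rw [derivation_prod]
    refine Finset.sum_congr rfl fun p hp => ?_
    have hne : p.1 ≠ p.2 := (Finset.mem_filter.mp hp).2.ne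
    have hEp : E p.1 p.2 = (X p.1 - X p.2) ^ (2 * α - 1) *
        ∏ q ∈ (Finset.univ.filter (fun p : Fin n × Fin n => p.1 < p.2)).erase p,
          (X q.1 - X q.2) ^ (2 * α) := by
      apply mul_left_cancel₀ (ne_X_sub hne)
      rw [hE _ _ hne, ← mul_assoc, mul_pow_sub_one (by omega), selbergPoly_eq_prod_filter,
        ← Finset.mul_prod_erase _ _ hp]
    rw [Derivation.leibniz_pow, hEp, smul_eq_mul, nsmul_eq_mul, smul_eq_C_mul]
    push_cast
    simp only [map_mul, map_natCast, map_ofNat]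
    ring
  rw [h1, ← Finset.smul_sum]
  congr 1
  rw [Finset.sum_filter, ← Finset.univ_product_univ, Finset.sum_product]
  have h2 : ∀ a b : Fin n, (if a < b then E a b * pderiv i (X a - X b : MvPolynomial (Fin n) ℝ)
      else 0) = (if a = i then (if i < b then E i b else 0) else 0) +
        (if b = i then (if a < i then E i a else 0) else 0) := by
    intro a b
    rw [map_sub, pderiv_X, pderiv_X]
    by_cases ha : a = i <;> by_cases hb : b = i
    · subst ha; subst hb; simp
    · subst ha; simp [hb]
    · subst hb
      by_cases hab : a < b
      · rw [hneg b a hab.ne']; simp [ha, hab]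
      · simp [hab, ha]
    · simp [ha, hb]
  simp only [h2, Finset.sum_add_distrib]
  rw [Finset.sum_comm]
  simp only [Finset.sum_ite_eq', Finset.mem_univ, if_true, ← Finset.sum_add_distrib]
  rw [← Finset.sum_erase _ (a := i) (by simp)]
  refine Finset.sum_congr rfl fun j hj => ?_
  rcases lt_or_gt_of_ne (Finset.ne_of_mem_erase hj) with h | h <;> simp [h, h.not_gt]

/-! ### Aomoto's recursion -/

theorem rename_swap_prod_X {n : ℕ} {i j : Fin n} {T : Finset (Fin n)} (h : i ∈ T ↔ j ∈ T) :
    rename (Equiv.swap i j) (∏ k ∈ T, X k : MvPolynomial (Fin n) ℝ) = ∏ k ∈ T, X k := by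
  rw [map_prod]
  simp only [rename_X]
  refine Finset.prod_equiv (Equiv.swap i j) (fun k => ?_) (fun k _ => rfl)
  rcases eq_or_ne k i with rfl | hi
  · simp [h]
  rcases eq_or_ne k j with rfl | hj
  · simp [h]
  rw [Equiv.swap_apply_of_ne_of_ne hi hj]

/-- Aomoto's recursion: integrating `∂_i (x_i x_S Δ^{2α})` by parts, with
`x_S = ∏_{k ∈ S} x_k`, produces the terms
`x_i x_S Δ^{2α} / (x_i - x_j)` for `j ≠ i`. Under the exchange of `x_i` and `x_j` such a term is
odd if `j ∈ S`, so it contributes `0`; if `j ∉ S` it symmetrizes to `x_S Δ^{2α} / 2`. -/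
theorem aomoto_step {α n : ℕ} (hα : 0 < α) (s : ℝ) {i : Fin n} {S : Finset (Fin n)} (hi : i ∉ S) :
    gammaMoment (fun _ => s) ((∏ k ∈ insert i S, X k) * selbergPoly α n) =
      (s + α * (n - 1 - S.card)) * gammaMoment (fun _ => s) ((∏ k ∈ S, X k) * selbergPoly α n) := by
  classical
  have hex : ∀ a b : Fin n, ∃ F : MvPolynomial (Fin n) ℝ,
      a ≠ b → (X a - X b) * F = selbergPoly α n := fun a b => by
    by_cases h : a = b
    · exact ⟨0, fun h' => absurd h h'⟩
    · obtain ⟨F, hF⟩ := selbergPoly_dvd hα h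
      exact ⟨F, fun _ => hF.symm⟩
  choose E hE using hex
  have hswap : ∀ j, i ≠ j → rename (Equiv.swap i j) (E i j) = -E i j := fun j h => by
    have h1 := congrArg (rename (Equiv.swap i j)) (hE i j h)
    rw [rename_selbergPoly, ← hE i j h, map_mul, map_sub, rename_X, rename_X,
      Equiv.swap_apply_left, Equiv.swap_apply_right] at h1
    apply mul_left_cancel₀ (ne_X_sub h.symm)
    rw [h1]
    ring
  have hmem : ∀ j ∈ S, gammaMoment (fun _ => s) ((∏ k ∈ insert i S, X k) * E i j) = 0 := by
    intro j hj
    have hij : i ≠ j := fun e => hi (e ▸ hj)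
    have h1 := gammaMoment_rename s (Equiv.swap i j) ((∏ k ∈ insert i S, X k) * E i j)
    rw [map_mul, rename_swap_prod_X (by simp [hj]), hswap j hij, mul_neg, map_neg] at h1
    linarith
  have hnot : ∀ j, i ≠ j → j ∉ S → gammaMoment (fun _ => s) ((∏ k ∈ insert i S, X k) * E i j) =
      1 / 2 * gammaMoment (fun _ => s) ((∏ k ∈ S, X k) * selbergPoly α n) := by
    intro j hij hj
    have h1 := gammaMoment_rename s (Equiv.swap i j) ((∏ k ∈ insert i S, X k) * E i j)
    rw [Finset.prod_insert hi, map_mul (rename _), map_mul (rename _), rename_swap_prod_X (by simp [hi, hj]), hswap j hij,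
      rename_X, Equiv.swap_apply_left] at h1
    have h2 : (∏ k ∈ S, X k) * selbergPoly α n =
        X i * (∏ k ∈ S, X k) * E i j + X j * (∏ k ∈ S, X k) * -E i j := by
      rw [← hE i j hij]; ring
    rw [Finset.prod_insert hi, h2, map_add, h1]
    ring
  have hd : pderiv i (∏ k ∈ S, X k : MvPolynomial (Fin n) ℝ) = 0 := by
    rw [derivation_prod]
    refine Finset.sum_eq_zero fun k hk => ?_
    rw [pderiv_X_of_ne (show k ≠ i from fun e => hi (e ▸ hk)), mul_zero]
  rw [Finset.prod_insert hi, mul_assoc, gammaMoment_X_mul, Derivation.leibniz, hd, smul_zero,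
    add_zero, smul_eq_mul, pderiv_selbergPoly hα E hE, ← mul_assoc, ← Finset.prod_insert hi,
    mul_smul_comm, map_smul, Finset.mul_sum, map_sum, smul_eq_mul]
  have hsum : ∑ j ∈ Finset.univ.erase i,
      gammaMoment (fun _ => s) ((∏ k ∈ insert i S, X k) * E i j) =
      ∑ j ∈ (insert i S)ᶜ, 1 / 2 * gammaMoment (fun _ => s) ((∏ k ∈ S, X k) * selbergPoly α n) := by
    symm
    refine Finset.sum_subset_zero_on_sdiff (fun j hj => ?_) (fun j hj => ?_) (fun j hj => ?_)
    · simp only [Finset.mem_compl, Finset.mem_insert, not_or] at hj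
      simp [hj.1]
    · simp only [Finset.mem_sdiff, Finset.mem_erase, Finset.mem_compl, Finset.mem_insert] at hj
      exact hmem j (by tauto)
    · simp only [Finset.mem_compl, Finset.mem_insert, not_or] at hj
      exact (hnot j (Ne.symm hj.1) hj.2).symm
  have hcard : ((insert i S)ᶜ.card : ℝ) = n - 1 - S.card := by
    have h1 := Finset.card_compl_add_card (insert i S)
    rw [Finset.card_insert_of_notMem hi, Fintype.card_fin] at h1
    have h2 : (((insert i S)ᶜ.card + (S.card + 1) : ℕ) : ℝ) = n := by rw [h1]
    push_cast at h2
    linarith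
  rw [hsum, Finset.sum_const, nsmul_eq_mul, hcard]
  ring

theorem aomoto {α n : ℕ} (hα : 0 < α) (s : ℝ) (S : Finset (Fin n)) :
    gammaMoment (fun _ => s) ((∏ k ∈ S, X k) * selbergPoly α n) =
      (∏ j ∈ Finset.range S.card, (s + α * (n - 1 - j))) *
        gammaMoment (fun _ => s) (selbergPoly α n) := by
  classical
  induction S using Finset.induction_on with
  | empty => simp
  | insert i S hi ih =>
    rw [aomoto_step hα s hi, ih, Finset.card_insert_of_notMem hi, Finset.prod_range_succ]
    ring

/-! ### Evaluation of the functional on the Vandermonde power -/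

theorem pow_mul_prod_range (s : ℝ) (f : ℕ → ℝ) (n : ℕ) :
    s ^ n * ∏ j ∈ Finset.range n, f j = ∏ j ∈ Finset.range n, s * f j := by
  simp [Finset.prod_mul_distrib]

/-- The polynomial `∏_{j<n} (t)_{jα}` in `t`, where `(t)_m` is the rising factorial. -/
noncomputable def pochProd (α n : ℕ) : Polynomial ℝ :=
  ∏ j ∈ Finset.range n, ascPochhammer ℝ (j * α)

theorem pochProd_eval (α n : ℕ) (s : ℝ) :
    (pochProd α n).eval s = ∏ j ∈ Finset.range n, (ascPochhammer ℝ (j * α)).eval s := by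
  simp [pochProd, Polynomial.eval_prod]

theorem mul_ascPochhammer_add_one (m : ℕ) (s : ℝ) :
    s * (ascPochhammer ℝ m).eval (s + 1) = (s + m) * (ascPochhammer ℝ m).eval s := by
  rw [mul_comm (s + m), ← ascPochhammer_succ_eval, ascPochhammer_succ_left]
  simp

theorem pow_mul_pochProd_add_one (α n : ℕ) (s : ℝ) :
    s ^ n * (pochProd α n).eval (s + 1) =
      (∏ j ∈ Finset.range n, (s + α * j)) * (pochProd α n).eval s := by
  rw [pochProd_eval, pochProd_eval, ← Finset.prod_mul_distrib]
  rw [pow_mul_prod_range]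
  refine Finset.prod_congr rfl fun j _ => ?_
  rw [mul_ascPochhammer_add_one]
  push_cast
  ring

/-- The shift equation in the parameter, from Aomoto's recursion with all `n` variables. -/
theorem gammaMoment_selbergPoly_add_one {α n : ℕ} (hα : 0 < α) (s : ℝ) :
    s ^ n * gammaMoment (fun _ => s + 1) (selbergPoly α n) =
      (∏ j ∈ Finset.range n, (s + α * j)) * gammaMoment (fun _ => s) (selbergPoly α n) := by
  have h1 := aomoto (n := n) hα s Finset.univ
  have h2 := gammaMoment_prod_X_pow_mul (fun _ => s) (fun _ => 1) (selbergPoly α n)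
  simp only [pow_one, ascPochhammer_one, Polynomial.eval_X, Finset.prod_const, Finset.card_univ,
    Fintype.card_fin, Nat.cast_one] at h1 h2
  rw [← h2, h1, ← Finset.prod_range_reflect]
  congr 1
  refine Finset.prod_congr rfl fun j hj => ?_
  have : j + 1 ≤ n := Finset.mem_range.mp hj
  rw [Nat.sub_sub, Nat.cast_sub (by omega)]
  push_cast
  ring

/-- Both sides are polynomials in `s` obeying the same first-order shift equation, so they are
proportional at all positive integers, hence everywhere. -/
theorem exists_gammaMoment_selbergPoly {α : ℕ} (hα : 0 < α) (n : ℕ) :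
    ∃ C : ℝ, ∀ s, gammaMoment (fun _ => s) (selbergPoly α n) = C * (pochProd α n).eval s := by
  obtain ⟨p, hp⟩ := gammaMoment_poly (fun _ => Polynomial.X) (selbergPoly α n)
  simp only [Polynomial.eval_X] at hp
  have hQ : ∀ s : ℝ, 0 < s → 0 < (pochProd α n).eval s := fun s hs => by
    rw [pochProd_eval]
    exact Finset.prod_pos fun j _ => ascPochhammer_pos _ _ hs
  refine ⟨p.eval 1 / (pochProd α n).eval 1, fun s => ?_⟩
  set C := p.eval 1 / (pochProd α n).eval 1 with hC
  have hnat : ∀ m : ℕ, p.eval (m + 1 : ℝ) = C * (pochProd α n).eval (m + 1 : ℝ) := by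
    intro m
    induction m with
    | zero => simp [hC, (hQ 1 one_pos).ne']
    | succ m ih =>
      have hs : (0 : ℝ) < m + 1 := by positivity
      have h1 := gammaMoment_selbergPoly_add_one (n := n) hα (m + 1 : ℝ)
      have h2 := pow_mul_pochProd_add_one α n (m + 1 : ℝ)
      rw [hp, hp, ih] at h1
      apply mul_left_cancel₀ (pow_ne_zero n hs.ne')
      push_cast
      linear_combination h1 - C * h2
  have hpoly : p = Polynomial.C C * pochProd α n := by
    refine Polynomial.eq_of_infinite_eval_eq _ _ ?_
    refine (Set.infinite_range_of_injective (f := fun m : ℕ => (m + 1 : ℝ)) ?_).mono ?_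
    · intro a b h
      simpa using h
    · rintro _ ⟨m, rfl⟩
      simpa using hnat m
  rw [hp, hpoly]
  simp

/-- The constant of proportionality is found by induction on `n`, by letting one of the
parameters tend to `0`, which removes a variable from the integral. -/
theorem gammaMoment_selbergPoly {α : ℕ} (hα : 0 < α) (n : ℕ) (s : ℝ) :
    gammaMoment (fun _ => s) (selbergPoly α n) =
      (∏ j ∈ Finset.range n, (((j + 1) * α).factorial : ℝ) / (α.factorial : ℝ)) *
        (pochProd α n).eval s := by
  induction n generalizing s with
  | zero =>
    have : (selbergPoly α 0) = monomial 0 1 := by simp [selbergPoly]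
    rw [this, gammaMoment_monomial]
    simp [pochProd]
  | succ n ih =>
    obtain ⟨C, hC⟩ := exists_gammaMoment_selbergPoly hα (n + 1)
    -- Aomoto's recursion for all variables but the first; the common factor `s ^ n` is the
    -- reason for assuming `s ≠ 0`.
    have hmixed : ∀ s : ℝ, s ≠ 0 →
        gammaMoment (Fin.cons s fun _ => s + 1 : Fin (n + 1) → ℝ) (selbergPoly α (n + 1)) =
          C * ∏ j ∈ Finset.range n, (ascPochhammer ℝ ((j + 1) * α)).eval (s + 1) := by
      intro s hs
      have h1 := aomoto (n := n + 1) hα s (Finset.univ.erase 0)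
      have h2 := gammaMoment_prod_X_pow_mul (fun _ => s) (Fin.cons 0 fun _ => 1)
        (selbergPoly α (n + 1))
      have h3 : (fun i : Fin (n + 1) => s + ((Fin.cons 0 fun _ => 1 : Fin (n + 1) → ℕ) i : ℝ)) =
          (Fin.cons s fun _ => s + 1 : Fin (n + 1) → ℝ) := by
        ext i
        refine Fin.cases ?_ (fun i => ?_) i <;> simp
      have h4 : (∏ k ∈ Finset.univ.erase 0, X k : MvPolynomial (Fin (n + 1)) ℝ) =
          ∏ i, X i ^ (Fin.cons 0 fun _ => 1 : Fin (n + 1) → ℕ) i := by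
        rw [← Finset.mul_prod_erase _ _ (Finset.mem_univ 0), Fin.cons_zero, pow_zero, one_mul]
        refine Finset.prod_congr rfl fun k hk => ?_
        obtain ⟨k, rfl⟩ := Fin.exists_succ_eq.mpr (Finset.ne_of_mem_erase hk)
        simp
      rw [h4, h2, h3, Fin.prod_univ_succ, hC] at h1
      simp only [Fin.cons_zero, Fin.cons_succ, ascPochhammer_zero, ascPochhammer_one,
        Polynomial.eval_one, Polynomial.eval_X, one_mul, Finset.prod_const, Finset.card_univ,
        Fintype.card_fin, Finset.card_erase_of_mem (Finset.mem_univ _)] at h1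
      apply mul_left_cancel₀ (pow_ne_zero n hs)
      have h5 : (∏ j ∈ Finset.range n, (s + α * ((n + 1 : ℕ) - 1 - j))) *
          ∏ j ∈ Finset.range n, (ascPochhammer ℝ ((j + 1) * α)).eval s =
          s ^ n * ∏ j ∈ Finset.range n, (ascPochhammer ℝ ((j + 1) * α)).eval (s + 1) := by
        rw [← Finset.prod_range_reflect, ← Finset.prod_mul_distrib]
        rw [pow_mul_prod_range]
        refine Finset.prod_congr rfl fun j hj => ?_
        have : j + 1 ≤ n := Finset.mem_range.mp hj
        rw [mul_ascPochhammer_add_one, Nat.sub_sub, Nat.cast_sub (by omega)]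
        push_cast
        ring
      rw [h1, pochProd_eval, Finset.prod_range_succ', Nat.add_sub_cancel, zero_mul,
        ascPochhammer_zero, Polynomial.eval_one, mul_one]
      linear_combination C * h5
    -- Both sides of `hmixed` are polynomial in `s`, so the identity extends to `s = 0`.
    have hzero : gammaMoment (Fin.cons 0 fun _ => 1 : Fin (n + 1) → ℝ) (selbergPoly α (n + 1)) =
          C * ∏ j ∈ Finset.range n, (((j + 1) * α).factorial : ℝ) := by
      obtain ⟨p, hp⟩ := gammaMoment_poly
        (Fin.cons Polynomial.X fun _ => Polynomial.X + 1 : Fin (n + 1) → Polynomial ℝ)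
        (selbergPoly α (n + 1))
      have h3 : ∀ t : ℝ, (fun i : Fin (n + 1) => ((Fin.cons Polynomial.X
          fun _ => Polynomial.X + 1 : Fin (n + 1) → Polynomial ℝ) i).eval t) =
          (Fin.cons t fun _ => t + 1 : Fin (n + 1) → ℝ) := by
        intro t
        ext i
        refine Fin.cases ?_ (fun i => ?_) i <;> simp
      have hpoly : p = Polynomial.C C * ∏ j ∈ Finset.range n,
          (ascPochhammer ℝ ((j + 1) * α)).comp (Polynomial.X + 1) := by
        refine Polynomial.eq_of_infinite_eval_eq _ _ ((Set.Ioi_infinite (0 : ℝ)).mono ?_)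
        intro t ht
        have h5 := hp t
        rw [h3, hmixed t (ne_of_gt ht)] at h5
        simp [← h5, Polynomial.eval_prod]
      have h6 := hp 0
      rw [h3, hpoly] at h6
      simpa [Polynomial.eval_prod, ascPochhammer_eval_one] using h6
    -- The first variable is now evaluated at `0`, leaving an integral in `n` variables with
    -- parameter `1 + 2α`.
    rw [gammaMoment_cons_zero, aeval_selbergPoly_succ, gammaMoment_prod_X_pow_mul] at hzero
    simp only [Finset.prod_const, Finset.card_univ, Fintype.card_fin] at hzero
    have hfac : ∏ j ∈ Finset.range n, (((j + 2) * α).factorial : ℝ) =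
        (ascPochhammer ℝ (2 * α)).eval 1 ^ n * (pochProd α n).eval (1 + ((2 * α : ℕ) : ℝ)) := by
      rw [pochProd_eval]
      rw [pow_mul_prod_range]
      refine Finset.prod_congr rfl fun j _ => ?_
      have := congrArg (Polynomial.eval (1 : ℝ)) (ascPochhammer_mul ℝ (2 * α) (j * α))
      simp only [Polynomial.eval_mul, Polynomial.eval_comp, ascPochhammer_eval_one,
        Polynomial.eval_add, Polynomial.eval_X, Polynomial.eval_natCast] at this
      rw [show (j + 2) * α = 2 * α + j * α by ring, ← this, ascPochhammer_eval_one]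
    rw [ih, mul_left_comm, ← hfac] at hzero
    have hC' : C = ∏ j ∈ Finset.range (n + 1),
        (((j + 1) * α).factorial : ℝ) / (α.factorial : ℝ) := by
      have hpos : ∏ j ∈ Finset.range n, (((j + 1) * α).factorial : ℝ) ≠ 0 :=
        Finset.prod_ne_zero_iff.mpr fun j _ => by positivity
      have hshift : (∏ j ∈ Finset.range n, (((j + 2) * α).factorial : ℝ)) * (α.factorial : ℝ) =
          (∏ j ∈ Finset.range n, (((j + 1) * α).factorial : ℝ)) * ((n + 1) * α).factorial := by
        have h1 := Finset.prod_range_succ (fun j => (((j + 1) * α).factorial : ℝ)) n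
        have h2 := Finset.prod_range_succ' (fun j => (((j + 1) * α).factorial : ℝ)) n
        rw [h1] at h2
        simpa using h2.symm
      have hα0 : (α.factorial : ℝ) ≠ 0 := by positivity
      apply mul_right_cancel₀ hpos
      rw [← hzero, Finset.prod_range_succ, mul_assoc]
      congr 1
      field_simp
      linarith
    rw [hC, hC']

/-! ### Passage to the integral -/

open MeasureTheory

theorem Gamma_add_nat {s : ℝ} (hs : 0 < s) (m : ℕ) :
    Real.Gamma (s + m) = (ascPochhammer ℝ m).eval s * Real.Gamma s := by
  induction m with
  | zero => simp
  | succ m ih =>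
    have : s + m ≠ 0 := by positivity
    rw [Nat.cast_succ, ← add_assoc, Real.Gamma_add_one this, ih, ascPochhammer_succ_eval]
    ring

/-- The integral of a polynomial against the Laguerre weight is, up to the total mass
`Γ(1+λ)^n`, the functional `gammaMoment` at the constant parameter `1 + λ`. -/
theorem integral_eval_mul_weight {n : ℕ} {lam : ℝ} (hlam : -1 < lam)
    (f : MvPolynomial (Fin n) ℝ) :
    IntegrableOn (fun k : Fin n → ℝ => eval k f * ∏ i, Real.exp (-(k i)) * (k i) ^ lam)
        (Set.univ.pi fun _ => Set.Ioi (0 : ℝ)) ∧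
      ∫ k : Fin n → ℝ in Set.univ.pi (fun _ => Set.Ioi (0 : ℝ)),
        eval k f * ∏ i, Real.exp (-(k i)) * (k i) ^ lam =
      Real.Gamma (1 + lam) ^ n * gammaMoment (fun _ => 1 + lam) f := by
  have hs : 0 < 1 + lam := by linarith
  induction f using MvPolynomial.induction_on' with
  | monomial m c =>
    have hint : ∀ a : ℕ, IntegrableOn (fun x : ℝ => x ^ a * (Real.exp (-x) * x ^ lam))
        (Set.Ioi 0) ∧ ∫ x : ℝ in Set.Ioi 0, x ^ a * (Real.exp (-x) * x ^ lam) =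
          (ascPochhammer ℝ a).eval (1 + lam) * Real.Gamma (1 + lam) := by
      intro a
      have ha : 0 < 1 + lam + a := by positivity
      have hfun : Set.EqOn (fun x : ℝ => Real.exp (-x) * x ^ (1 + lam + a - 1))
          (fun x : ℝ => x ^ a * (Real.exp (-x) * x ^ lam)) (Set.Ioi 0) := by
        intro x hx
        have hx' : (0 : ℝ) < x := hx
        simp only
        rw [show 1 + lam + a - 1 = lam + a by ring, Real.rpow_add hx', Real.rpow_natCast]
        ring
      refine ⟨(Real.GammaIntegral_convergent ha).congr_fun hfun measurableSet_Ioi, ?_⟩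
      rw [← setIntegral_congr_fun measurableSet_Ioi hfun, ← Real.Gamma_eq_integral ha,
        Gamma_add_nat hs]
    have hfun : (fun k : Fin n → ℝ =>
        eval k (monomial m c) * ∏ i, Real.exp (-(k i)) * (k i) ^ lam) =
        fun k => c * ∏ i, (k i) ^ (m i) * (Real.exp (-(k i)) * (k i) ^ lam) := by
      ext k
      rw [eval_monomial, Finsupp.prod_fintype _ _ (by simp), mul_assoc,
        ← Finset.prod_mul_distrib]
    rw [hfun, IntegrableOn, volume_pi, Measure.restrict_pi_pi]
    refine ⟨(Integrable.fintype_prod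
      (f := fun i x => x ^ (m i) * (Real.exp (-x) * x ^ lam)) fun i => (hint (m i)).1).const_mul c, ?_⟩
    rw [integral_const_mul, integral_fintype_prod_eq_prod
      (f := fun i x => x ^ (m i) * (Real.exp (-x) * x ^ lam)), gammaMoment_monomial]
    simp only [(hint _).2]
    rw [Finset.prod_mul_distrib, Finset.prod_const, Finset.card_univ, Fintype.card_fin]
    ring
  | add p q hp hq =>
    simp only [map_add, add_mul, mul_add]
    exact ⟨hp.1.add hq.1, by rw [integral_add hp.1 hq.1, hp.2, hq.2]⟩

open MeasureTheory Finset in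
/-- Selberg's Laguerre-type integral: for positive integers `α`, `N` and real `λ > -1`,
`∫_{[0,∞)^N} ∏_{i<j}(k_i - k_j)^{2α} ∏_i e^{-k_i} k_i^λ dk
  = ∏_{j=0}^{N-1} Γ(1+α+jα) Γ(1+λ+jα) / Γ(1+α)`. -/
theorem selberg_laguerre (α N : ℕ) (hα : 0 < α) (hN : 0 < N) (lam : ℝ) (hlam : -1 < lam) :
    ∫ k : Fin N → ℝ in Set.univ.pi (fun _ => Set.Ici (0 : ℝ)),
        (∏ p ∈ Finset.univ.filter (fun p : Fin N × Fin N => p.1 < p.2),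
            (k p.1 - k p.2) ^ (2 * α)) *
          ∏ i, Real.exp (-(k i)) * (k i) ^ lam
      = ∏ j ∈ Finset.range N,
          Real.Gamma (1 + (α : ℝ) + (j : ℝ) * (α : ℝ)) *
            Real.Gamma (1 + lam + (j : ℝ) * (α : ℝ)) / Real.Gamma (1 + (α : ℝ)) := by
  have hs : 0 < 1 + lam := by linarith
  have hset : (Set.univ.pi fun _ => Set.Ici (0 : ℝ) : Set (Fin N → ℝ)) =ᵐ[volume]
      (Set.univ.pi fun _ => Set.Ioi (0 : ℝ)) :=
    Measure.ae_eq_set_pi fun _ _ => Ioi_ae_eq_Ici.symm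
  rw [setIntegral_congr_set hset]
  have hfun : ∀ k : Fin N → ℝ, ∏ p ∈ Finset.univ.filter (fun p : Fin N × Fin N => p.1 < p.2),
      (k p.1 - k p.2) ^ (2 * α) = eval k (selbergPoly α N) := fun k => by
    rw [selbergPoly_eq_prod_filter]
    simp
  simp only [hfun]
  rw [(integral_eval_mul_weight hlam _).2, gammaMoment_selbergPoly hα, pochProd_eval,
    ← Finset.prod_mul_distrib]
  rw [pow_mul_prod_range]
  refine Finset.prod_congr rfl fun j _ => ?_
  have h1 := Gamma_add_nat hs (j * α)
  have h2 := Real.Gamma_nat_eq_factorial ((j + 1) * α)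
  have h3 := Real.Gamma_nat_eq_factorial α
  push_cast at h1 h2
  rw [h1, show 1 + (α : ℝ) + j * α = (j + 1) * α + 1 by ring, h2, add_comm 1 (α : ℝ), h3]
  ring
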